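/- The algebraic de Rham cohomology of the smooth affine quadric x² + y² + z² = c (c ≠ 0) over ℂ has dimensions dim H⁰ = 1, dim H¹ = 0, dim H² = 1. -/

import Mathlib

set_option synthInstance.maxHeartbeats 1000000
set_option maxHeartbeats 1000000

open MvPolynomial

/-- The coordinate ring `A = ℂ[x,y,z]/(x²+y²+z²−c)` of the smooth affine quadric. -/
noncomputable abbrev QuadricRing (c : ℂ) : Type :=
  MvPolynomial (Fin 3) ℂ ⧸
    Ideal.span {(X 0 : MvPolynomial (Fin 3) ℂ) ^ 2 + X 1 ^ 2 + X 2 ^ 2 - C c}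

/-!
The quadric is the Danielewski surface `u v = f(z)` with `f = z² - c`, `u = x + i y`,
`v = i y - x`. The coordinate ring `A` of such a surface carries the Poisson bracket `{z, u} = u`,
`{v, z} = v`, `{u, v} = -f'(z)`. The Hamiltonian field `{z, ·}` generates a torus action, whose
weight decomposition gives `A = k[z] ⊕ im {z, ·}` and `ker {z, ·} = k[z]`.

If `f` is separable, the surface is smooth and the Poisson bivector identifies `Ω²` with `A`.
Expanding in weights and integrating by parts, every `1`-form is exact up to
`g dz + q(z) u dv`, whose differential corresponds to `-({z, g} + (f q)')`. It vanishes only when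
`g ∈ k[z]` and `(f q)' = 0`, that is `q = 0`, and then `g dz` is exact: this is `H¹ = 0`. The same
formula identifies `H²` with the cokernel of `q ↦ (f q)'` on `k[z]`, which has dimension
`deg f - 1`.
-/

open scoped Polynomial

section Polynomial

open Polynomial (derivative degreeLT)

section CommRing

variable {k : Type*} [CommRing k]

/-- The operator `q ↦ (f q)'` on polynomials; its cokernel is the second de Rham cohomology of the
surface `u v = f(z)`. -/
noncomputable def derivativeMul (f : k[X]) : k[X] →ₗ[k] k[X] :=
  derivative ∘ₗ LinearMap.mulLeft k f

theorem derivativeMul_apply (f q : k[X]) : derivativeMul f q = derivative (f * q) := rfl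

theorem derivative_mem_degreeLT {p : k[X]} {n : ℕ} (hp : p ∈ degreeLT k n) :
    derivative p ∈ degreeLT k (n - 1) := by
  rw [Polynomial.mem_degreeLT, Polynomial.degree_lt_iff_coeff_zero] at hp ⊢
  intro m hm
  rw [Polynomial.coeff_derivative, hp (m + 1) (by lia), zero_mul]

end CommRing

section Field

variable {k : Type*} [Field k] [CharZero k]

theorem derivative_surjective :
    Function.Surjective (derivative : k[X] →ₗ[k] k[X]) := by
  intro p
  induction p using Polynomial.induction_on' with
  | add p q hp hq =>
    obtain ⟨P, rfl⟩ := hp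
    obtain ⟨Q, rfl⟩ := hq
    exact ⟨P + Q, map_add _ _ _⟩
  | monomial n a =>
    have hn : (n + 1 : k) ≠ 0 := n.cast_add_one_ne_zero
    exact ⟨Polynomial.monomial (n + 1) (a / (n + 1)), by simp [hn]⟩

variable {f : k[X]}

theorem eq_zero_of_derivativeMul_mem_degreeLT (hf : f.natDegree ≠ 0) {q : k[X]}
    (hq : derivativeMul f q ∈ degreeLT k (f.natDegree - 1)) : q = 0 := by
  by_contra hq0
  have hdeg : (f * q).natDegree = f.natDegree + q.natDegree :=
    Polynomial.natDegree_mul (Polynomial.ne_zero_of_natDegree_gt hf.bot_lt) hq0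
  have hne : derivative (f * q) ≠ 0 := Polynomial.derivative_ne_zero.mpr (by lia)
  rw [derivativeMul_apply, Polynomial.mem_degreeLT, ← Polynomial.natDegree_lt_iff_degree_lt hne,
    Polynomial.natDegree_derivative, hdeg] at hq
  lia

theorem derivativeMul_injective (hf : f.natDegree ≠ 0) :
    Function.Injective (derivativeMul f) :=
  (injective_iff_map_eq_zero _).mpr fun _ hq =>
    eq_zero_of_derivativeMul_mem_degreeLT hf (hq ▸ zero_mem _)

theorem isCompl_range_derivativeMul (hf : f.natDegree ≠ 0) :
    IsCompl (LinearMap.range (derivativeMul f)) (degreeLT k (f.natDegree - 1)) := by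
  refine ⟨Submodule.disjoint_def.mpr ?_, Submodule.codisjoint_iff_exists_add_eq.mpr fun p => ?_⟩
  · rintro _ ⟨q, rfl⟩ hq
    rw [eq_zero_of_derivativeMul_mem_degreeLT hf hq, map_zero]
  · have hf0 : f ≠ 0 := Polynomial.ne_zero_of_natDegree_gt hf.bot_lt
    obtain ⟨P, rfl⟩ := derivative_surjective p
    refine ⟨derivativeMul f (P / f), derivative (P % f), ⟨_, rfl⟩,
      derivative_mem_degreeLT (Polynomial.mem_degreeLT.mpr ?_), ?_⟩
    · exact (EuclideanDomain.mod_lt P hf0).trans_eq (Polynomial.degree_eq_natDegree hf0)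
    · rw [derivativeMul_apply, ← map_add, EuclideanDomain.div_add_mod]

theorem finrank_quotient_range_derivativeMul (hf : f.natDegree ≠ 0) :
    Module.finrank k (k[X] ⧸ LinearMap.range (derivativeMul f)) = f.natDegree - 1 := by
  rw [(Submodule.quotientEquivOfIsCompl _ _ (isCompl_range_derivativeMul hf)).finrank_eq,
    (Polynomial.degreeLTEquiv k _).finrank_eq, Module.finrank_fin_fun]

end Field

end Polynomial

section LinearAlgebra

theorem disjoint_ker_range_of_iSup_eigenspace_eq_top {R M : Type*} [CommRing R] [IsDomain R]
    [AddCommGroup M] [Module R M] [Module.IsTorsionFree R M] {φ : Module.End R M}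
    (hφ : ⨆ μ, φ.eigenspace μ = ⊤) : Disjoint (LinearMap.ker φ) (LinearMap.range φ) := by
  have hrange : LinearMap.range φ ≤ ⨆ μ ≠ 0, φ.eigenspace μ := by
    rw [LinearMap.range_eq_map, ← hφ, Submodule.map_iSup, iSup_le_iff]
    rintro μ _ ⟨x, hx, rfl⟩
    rw [SetLike.mem_coe, Module.End.mem_eigenspace_iff] at hx
    rw [hx]
    rcases eq_or_ne μ 0 with rfl | hμ
    · simp
    · exact Submodule.smul_mem _ _
        (Submodule.mem_iSup_of_mem μ (Submodule.mem_iSup_of_mem hμ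
          (Module.End.mem_eigenspace_iff.mpr hx)))
  rw [← Module.End.eigenspace_zero]
  exact (φ.eigenspaces_iSupIndep 0).mono_right hrange

variable {R M N : Type*} [CommRing R] [AddCommGroup M] [Module R M] [AddCommGroup N] [Module R N]

theorem alternatingMap_pair_swap (ω : M [⋀^Fin 2]→ₗ[R] N) (x y : M) :
    ω ![x, y] = -ω ![y, x] := by
  rw [← ω.map_swap ![y, x] (zero_ne_one : (0 : Fin 2) ≠ 1)]
  congr 1
  ext i
  fin_cases i <;> rfl

theorem alternatingMap_pair_self (ω : M [⋀^Fin 2]→ₗ[R] N) (x : M) : ω ![x, x] = 0 :=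
  ω.map_eq_zero_of_eq ![x, x] (i := 0) (j := 1) rfl zero_ne_one

theorem smul_alternatingMap_pair_eq (ω : M [⋀^Fin 2]→ₗ[R] N) {x y t : M} {a b e : R}
    (hrel : a • x + b • y + e • t = 0) : b • ω ![x, y] = e • ω ![t, x] := by
  have hzero : ω ![a • x + b • y + e • t, x] = 0 := ω.map_coord_zero 0 hrel
  have hadd (m n : M) : ω ![m + n, x] = ω ![m, x] + ω ![n, x] := ω.map_vecCons_add _ _ _
  have hsmul (r : R) (m : M) : ω ![r • m, x] = r • ω ![m, x] := ω.map_vecCons_smul _ _ _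
  rw [hadd, hadd, hsmul, hsmul, hsmul, alternatingMap_pair_self, smul_zero, zero_add,
    alternatingMap_pair_swap ω y x, smul_neg] at hzero
  exact neg_add_eq_zero.mp hzero

theorem exteriorPower_two_eq_top_of_span_triple {x y t : M}
    (hspan : Submodule.span R {x, y, t} = ⊤) {S : Submodule R (⋀[R]^2 M)}
    (hxy : exteriorPower.ιMulti R 2 ![x, y] ∈ S) (hyt : exteriorPower.ιMulti R 2 ![y, t] ∈ S)
    (htx : exteriorPower.ιMulti R 2 ![t, x] ∈ S) : S = ⊤ := by
  rw [eq_top_iff, ← exteriorPower.ιMulti_span_of_span R 2 M hspan, Submodule.span_le]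
  rintro _ ⟨m, hm, rfl⟩
  have swap {a b : M} (h : exteriorPower.ιMulti R 2 ![a, b] ∈ S) :
      exteriorPower.ιMulti R 2 ![b, a] ∈ S := by
    rw [alternatingMap_pair_swap]
    exact S.neg_mem h
  have self (a : M) : exteriorPower.ιMulti R 2 ![a, a] ∈ S := by
    rw [alternatingMap_pair_self]
    exact S.zero_mem
  have hm' : m = ![m 0, m 1] := List.ofFn_inj.mp rfl
  have h0 : m 0 = x ∨ m 0 = y ∨ m 0 = t := hm ⟨0, rfl⟩
  have h1 : m 1 = x ∨ m 1 = y ∨ m 1 = t := hm ⟨1, rfl⟩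
  rw [SetLike.mem_coe, hm']
  rcases h0 with h0 | h0 | h0 <;> rcases h1 with h1 | h1 | h1 <;> rw [h0, h1]
  exacts [self x, hxy, swap htx, swap hxy, self y, hyt, htx, swap hyt, self t]

end LinearAlgebra

section Derivation

section CommRing

variable {k A : Type*} [CommRing k] [CommRing A] [Algebra k A]

theorem derivation_pow_mul_aeval {L : Derivation k A A} {x z : A} {μ : k} (hz : L z = 0)
    (hx : L x = μ • x) (n : ℕ) (p : k[X]) :
    L (x ^ n * Polynomial.aeval z p) = (n * μ) • (x ^ n * Polynomial.aeval z p) := by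
  rw [Derivation.leibniz, Derivation.map_aeval, Derivation.leibniz_pow, hz, hx]
  rcases n with _ | n
  · simp
  · rw [Algebra.smul_def μ, Algebra.smul_def (((n + 1 : ℕ) : k) * μ), map_mul, map_natCast]
    simp only [smul_eq_mul, nsmul_eq_mul, Nat.add_sub_cancel]
    ring

end CommRing

section Field

variable {k A : Type*} [Field k] [CharZero k] [CommRing A] [Algebra k A]

theorem pow_succ_mul_aeval_mem_range {L : Derivation k A A} {x z : A} {μ : k} (hz : L z = 0)
    (hμ : μ ≠ 0) (hx : L x = μ • x) (n : ℕ) (p : k[X]) :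
    x ^ (n + 1) * Polynomial.aeval z p ∈ LinearMap.range L.toLinearMap := by
  have hμ' : ((n + 1 : ℕ) : k) * μ ≠ 0 := mul_ne_zero (Nat.cast_ne_zero.mpr n.succ_ne_zero) hμ
  refine ⟨(((n + 1 : ℕ) : k) * μ)⁻¹ • (x ^ (n + 1) * Polynomial.aeval z p), ?_⟩
  rw [map_smul]
  exact (inv_smul_eq_iff₀ hμ').mpr (derivation_pow_mul_aeval hz hx (n + 1) p)

end Field

end Derivation

section Kaehler

open KaehlerDifferential (D)

section CommRing

variable {k A : Type*} [CommRing k] [CommRing A] [Algebra k A]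

theorem span_D_image_eq_top {s : Set A} (hs : Algebra.adjoin k s = ⊤) :
    Submodule.span A (D k A '' s) = ⊤ := by
  rw [eq_top_iff, ← KaehlerDifferential.span_range_derivation, Submodule.span_le]
  rintro _ ⟨a, rfl⟩
  set S := Submodule.span A (D k A '' s)
  have h : S.mkQ.compDer (D k A) = 0 := Derivation.ext_of_adjoin_eq_top s hs fun x hx =>
    (Submodule.Quotient.mk_eq_zero S).mpr (Submodule.subset_span ⟨x, hx, rfl⟩)
  exact (Submodule.Quotient.mk_eq_zero S).mp (Derivation.congr_fun h a)

/-- The alternating form `L₁ ∧ L₂` on Kähler differentials attached to two vector fields. -/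
noncomputable def derivationWedge (L₁ L₂ : Derivation k A A) : Ω[A⁄k] [⋀^Fin 2]→ₗ[A] A :=
  Matrix.detRowAlternating.compLinearMap
    (LinearMap.pi ![L₁.liftKaehlerDifferential, L₂.liftKaehlerDifferential])

theorem derivationWedge_D (L₁ L₂ : Derivation k A A) (a b : A) :
    derivationWedge L₁ L₂ ![D k A a, D k A b] = L₁ a * L₂ b - L₂ a * L₁ b := by
  refine (Matrix.det_fin_two (R := A) _).trans ?_
  simp

/-- `d₁` is the exterior derivative on `1`-forms, characterized by `d₁ (a db) = da ∧ db`. -/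
def IsExteriorDerivative (d₁ : Ω[A⁄k] →ₗ[k] ⋀[A]^2 Ω[A⁄k]) : Prop :=
  ∀ a b : A, d₁ (a • D k A b) = exteriorPower.ιMulti A 2 ![D k A a, D k A b]

theorem IsExteriorDerivative.apply_D {d₁ : Ω[A⁄k] →ₗ[k] ⋀[A]^2 Ω[A⁄k]}
    (hd₁ : IsExteriorDerivative d₁) (a : A) : d₁ (D k A a) = 0 := by
  rw [← one_smul A (D k A a), hd₁, Derivation.map_one_eq_zero]
  exact (exteriorPower.ιMulti A 2).map_coord_zero 0 rfl

end CommRing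

section Field

variable {k A : Type*} [Field k] [CharZero k] [CommRing A] [Algebra k A] {x y z : A}
  {S : Submodule k Ω[A⁄k]}

theorem pow_mul_aeval_smul_D_mem (hD : ∀ a, D k A a ∈ S) (hz : ∀ g : A, g • D k A z ∈ S)
    (n : ℕ) (p : k[X]) :
    (x ^ n * Polynomial.aeval z p) • D k A x ∈ S := by
  have hn : ((n + 1 : ℕ) : k) ≠ 0 := Nat.cast_ne_zero.mpr n.succ_ne_zero
  have hleibniz : ((n + 1 : ℕ) : k) • (x ^ n * Polynomial.aeval z p) • D k A x =
      D k A (x ^ (n + 1) * Polynomial.aeval z p) -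
        (x ^ (n + 1) * Polynomial.aeval z (Polynomial.derivative p)) • D k A z := by
    rw [Derivation.leibniz, Derivation.leibniz_pow, Derivation.map_aeval, Nat.add_sub_cancel,
      Nat.cast_smul_eq_nsmul]
    module
  rw [← S.smul_mem_iff hn, hleibniz]
  exact S.sub_mem (hD _) (hz _)

theorem pow_add_two_mul_aeval_smul_D_mem (hD : ∀ a, D k A a ∈ S)
    (hz : ∀ g : A, g • D k A z ∈ S) {f : k[X]} (hxy : x * y = Polynomial.aeval z f) (n : ℕ)
    (p : k[X]) : (y ^ (n + 2) * Polynomial.aeval z p) • D k A x ∈ S := by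
  have hrel := congrArg (D k A) hxy
  rw [Derivation.leibniz, Derivation.map_aeval] at hrel
  have hreduce : (y ^ (n + 2) * Polynomial.aeval z p) • D k A x =
      (y ^ (n + 1) * Polynomial.aeval z p * Polynomial.aeval z (Polynomial.derivative f)) •
          D k A z - (y ^ n * Polynomial.aeval z (f * p)) • D k A y := by
    rw [map_mul, ← hxy]
    linear_combination (norm := module) (y ^ (n + 1) * Polynomial.aeval z p) • hrel
  rw [hreduce]
  exact S.sub_mem (hz _) (pow_mul_aeval_smul_D_mem hD hz n (f * p))

end Field

end Kaehler

/-- The elements `u, v, z` present `A` as the coordinate ring `k[u, v, z] / (u v - f(z))` of a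
Danielewski surface. -/
structure IsDanielewski {k A : Type*} [CommRing k] [CommRing A] [Algebra k A] (f : k[X])
    (u v z : A) : Prop where
  aeval_surjective : Function.Surjective (aeval (R := k) ![u, v, z])
  ker_aeval : RingHom.ker (aeval (R := k) ![u, v, z]) =
    Ideal.span {X 0 * X 1 - Polynomial.aeval (X 2) f}

namespace IsDanielewski

open KaehlerDifferential (D)
open Polynomial (derivative)

section CommRing

variable {k A : Type*} [CommRing k] [CommRing A] [Algebra k A] {f : k[X]} {u v z : A}

theorem mul_eq (h : IsDanielewski f u v z) : u * v = Polynomial.aeval z f := by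
  have hmem : X 0 * X 1 - Polynomial.aeval (X 2) f ∈ RingHom.ker (aeval (R := k) ![u, v, z]) :=
    h.ker_aeval ▸ Ideal.mem_span_singleton_self _
  simpa [RingHom.mem_ker, sub_eq_zero, ← Polynomial.aeval_algHom_apply] using hmem

theorem adjoin_eq_top (h : IsDanielewski f u v z) :
    Algebra.adjoin k {u, v, z} = ⊤ := by
  have hrange : Set.range ![u, v, z] = {u, v, z} := by
    rw [Matrix.range_cons, Matrix.range_cons_cons_empty, Set.singleton_union]
  rw [← hrange, Algebra.adjoin_range_eq_range_aeval]
  exact AlgHom.range_eq_top _ |>.mpr h.aeval_surjective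

theorem derivation_ext (h : IsDanielewski f u v z) {M : Type*} [AddCommGroup M] [Module k M]
    [Module A M] {L₁ L₂ : Derivation k A M} (hu : L₁ u = L₂ u) (hv : L₁ v = L₂ v)
    (hz : L₁ z = L₂ z) : L₁ = L₂ := by
  refine Derivation.ext_of_adjoin_eq_top _ h.adjoin_eq_top ?_
  rintro _ (rfl | rfl | rfl)
  exacts [hu, hv, hz]

/-- Powers of `u v` are absorbed into the coefficient, so `A` is spanned by the `uⁿ p(z)` and
`vⁿ p(z)`. -/
theorem eq_top_of_pow_mul_aeval_mem (h : IsDanielewski f u v z) {S : Submodule k A}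
    (hu : ∀ (n : ℕ) (p : k[X]), u ^ n * Polynomial.aeval z p ∈ S)
    (hv : ∀ (n : ℕ) (p : k[X]), v ^ n * Polynomial.aeval z p ∈ S) : S = ⊤ := by
  have hmonomial (a b c : ℕ) : u ^ a * v ^ b * z ^ c ∈ S := by
    rcases le_total b a with hab | hab <;> obtain ⟨n, rfl⟩ := Nat.exists_eq_add_of_le hab
    · convert hu n (f ^ b * Polynomial.X ^ c) using 1
      simp only [map_mul, map_pow, Polynomial.aeval_X, ← h.mul_eq]
      ring
    · convert hv n (f ^ a * Polynomial.X ^ c) using 1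
      simp only [map_mul, map_pow, Polynomial.aeval_X, ← h.mul_eq]
      ring
  refine eq_top_iff.mpr fun x _ => ?_
  obtain ⟨P, rfl⟩ := h.aeval_surjective x
  induction P using MvPolynomial.induction_on' with
  | monomial s r =>
    rw [aeval_monomial, Finsupp.prod_fintype _ _ (by simp), Fin.prod_univ_three,
      ← Algebra.smul_def]
    exact S.smul_mem r (hmonomial (s 0) (s 1) (s 2))
  | add P Q hP hQ =>
    rw [map_add]
    exact S.add_mem (hP trivial) (hQ trivial)

theorem smul_mem_of_pow_mul_aeval_smul_mem (h : IsDanielewski f u v z) {M : Type*}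
    [AddCommGroup M] [Module k M] [Module A M] [IsScalarTower k A M] {S : Submodule k M} {m : M}
    (hu : ∀ (n : ℕ) (p : k[X]), (u ^ n * Polynomial.aeval z p) • m ∈ S)
    (hv : ∀ (n : ℕ) (p : k[X]), (v ^ n * Polynomial.aeval z p) • m ∈ S) (a : A) : a • m ∈ S := by
  have htop : S.comap ((LinearMap.toSpanSingleton A M m).restrictScalars k) = ⊤ :=
    h.eq_top_of_pow_mul_aeval_mem hu hv
  exact Submodule.eq_top_iff'.mp htop a

theorem eq_zero_of_mul_aeval_eq_zero (h : IsDanielewski f u v z) {p : k[X]}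
    (hp : u * Polynomial.aeval z p = 0) : p = 0 := by
  have hmem : X 0 * Polynomial.aeval (X 2) p ∈ RingHom.ker (aeval (R := k) ![u, v, z]) := by
    simpa [RingHom.mem_ker, ← Polynomial.aeval_algHom_apply] using hp
  rw [h.ker_aeval, Ideal.mem_span_singleton] at hmem
  simpa [← Polynomial.aeval_algHom_apply] using
    map_dvd (aeval (R := k) ![(1 : k[X]), f, Polynomial.X]) hmem

theorem aeval_injective (h : IsDanielewski f u v z) :
    Function.Injective (Polynomial.aeval (R := k) z) :=
  (injective_iff_map_eq_zero _).mpr fun p hp =>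
    h.eq_zero_of_mul_aeval_eq_zero (by rw [hp, mul_zero])

theorem aeval_derivation_eq_zero (h : IsDanielewski f u v z)
    {L : Derivation k (MvPolynomial (Fin 3) k) (MvPolynomial (Fin 3) k)}
    (hL : v * aeval ![u, v, z] (L (X 0)) + u * aeval ![u, v, z] (L (X 1)) =
      Polynomial.aeval z (derivative f) * aeval ![u, v, z] (L (X 2)))
    (P : MvPolynomial (Fin 3) k) (hP : aeval ![u, v, z] P = 0) :
    aeval ![u, v, z] (L P) = 0 := by
  have hP' : P ∈ RingHom.ker (aeval (R := k) ![u, v, z]) := hP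
  rw [h.ker_aeval, Ideal.mem_span_singleton] at hP'
  obtain ⟨Q, rfl⟩ := hP'
  have hmul := h.mul_eq
  simp only [Derivation.leibniz, map_sub, Derivation.map_aeval, smul_eq_mul, map_add, map_mul,
    ← Polynomial.aeval_algHom_apply, aeval_X, Matrix.cons_val] at hL ⊢
  linear_combination aeval ![u, v, z] Q * hL + aeval ![u, v, z] (L Q) * hmul

/-- The vector field on the Danielewski surface with prescribed values on `u`, `v`, `z`. -/
noncomputable def vectorField (h : IsDanielewski f u v z) (a b e : A)
    (hrel : v * a + u * b = Polynomial.aeval z (derivative f) * e) : Derivation k A A :=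
  Derivation.liftOfSurjective h.aeval_surjective
    (d := mkDerivation k fun i => Function.surjInv h.aeval_surjective (![a, b, e] i))
    (h.aeval_derivation_eq_zero (by simpa [Function.surjInv_eq] using hrel))

section vectorField

variable (h : IsDanielewski f u v z) {a b e : A}
  (hrel : v * a + u * b = Polynomial.aeval z (derivative f) * e)

theorem vectorField_coord (i : Fin 3) :
    h.vectorField a b e hrel (![u, v, z] i) = ![a, b, e] i := by
  rw [← aeval_X (R := k) ![u, v, z] i, vectorField, Derivation.liftOfSurjective_apply,
    mkDerivation_X]
  exact Function.surjInv_eq h.aeval_surjective _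

theorem vectorField_u : h.vectorField a b e hrel u = a := h.vectorField_coord hrel 0

theorem vectorField_v : h.vectorField a b e hrel v = b := h.vectorField_coord hrel 1

theorem vectorField_z : h.vectorField a b e hrel z = e := h.vectorField_coord hrel 2

end vectorField

/-- The Hamiltonian vector field `{u, ·}` of the Poisson bracket `{u, v} = -f'(z)`,
`{v, z} = v`, `{z, u} = u`. -/
noncomputable def hamU (h : IsDanielewski f u v z) : Derivation k A A :=
  h.vectorField 0 (-Polynomial.aeval z (derivative f)) (-u) (by ring)

/-- The Hamiltonian vector field `{v, ·}`, see `hamU`. -/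
noncomputable def hamV (h : IsDanielewski f u v z) : Derivation k A A :=
  h.vectorField (Polynomial.aeval z (derivative f)) 0 v (by ring)

/-- The Hamiltonian vector field `{z, ·}`, see `hamU`; it generates the torus action
`t · (u, v, z) = (t u, t⁻¹ v, z)`. -/
noncomputable def hamZ (h : IsDanielewski f u v z) : Derivation k A A :=
  h.vectorField u (-v) 0 (by ring)

variable (h : IsDanielewski f u v z)

theorem hamU_u : h.hamU u = 0 := h.vectorField_u _

theorem hamU_v : h.hamU v = -Polynomial.aeval z (derivative f) := h.vectorField_v _

theorem hamU_z : h.hamU z = -u := h.vectorField_z _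

theorem hamV_u : h.hamV u = Polynomial.aeval z (derivative f) := h.vectorField_u _

theorem hamV_v : h.hamV v = 0 := h.vectorField_v _

theorem hamV_z : h.hamV z = v := h.vectorField_z _

theorem hamZ_u : h.hamZ u = u := h.vectorField_u _

theorem hamZ_v : h.hamZ v = -v := h.vectorField_v _

theorem hamZ_z : h.hamZ z = 0 := h.vectorField_z _

/-- The function `u v - f(z)` defining the surface is a Casimir of the Poisson bracket on affine
space. -/
theorem hamiltonian_relation (a : A) :
    v * h.hamU a + u * h.hamV a = Polynomial.aeval z (derivative f) * h.hamZ a := by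
  have hL : v • h.hamU + u • h.hamV = Polynomial.aeval z (derivative f) • h.hamZ := by
    apply h.derivation_ext <;>
      simp only [Derivation.add_apply, Derivation.smul_apply, smul_eq_mul, hamU_u, hamU_v,
        hamU_z, hamV_u, hamV_v, hamV_z, hamZ_u, hamZ_v, hamZ_z] <;> ring
  exact Derivation.congr_fun hL a

theorem hamU_aeval (p : k[X]) :
    h.hamU (Polynomial.aeval z p) = -(u * Polynomial.aeval z (derivative p)) := by
  rw [Derivation.map_aeval, hamU_z, smul_neg, smul_eq_mul, mul_comm]

theorem hamV_aeval_mul_u (q : k[X]) :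
    h.hamV (Polynomial.aeval z q * u) = Polynomial.aeval z (derivativeMul f q) := by
  rw [Derivation.leibniz, Derivation.map_aeval, hamV_u, hamV_z, derivativeMul_apply,
    Polynomial.derivative_mul, map_add, map_mul, map_mul, ← h.mul_eq]
  simp only [smul_eq_mul]
  ring

theorem range_aeval_le_ker_hamZ :
    LinearMap.range (Polynomial.aeval (R := k) z).toLinearMap ≤
      LinearMap.ker h.hamZ.toLinearMap := by
  rintro _ ⟨p, rfl⟩
  change h.hamZ (Polynomial.aeval z p) = 0
  rw [Derivation.map_aeval, hamZ_z, smul_zero]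

theorem smul_D_u_add_smul_D_v (h : IsDanielewski f u v z) :
    v • D k A u + u • D k A v = Polynomial.aeval z (derivative f) • D k A z := by
  have hD := congrArg (D k A) h.mul_eq
  rw [Derivation.leibniz, Derivation.map_aeval] at hD
  rw [← hD, add_comm]

theorem span_D_eq_top (h : IsDanielewski f u v z) :
    Submodule.span A {D k A u, D k A v, D k A z} = ⊤ := by
  rw [← span_D_image_eq_top h.adjoin_eq_top]
  simp [Set.image_insert_eq]

theorem exists_bezout (h : IsDanielewski f u v z) (hf : f.Separable) :
    ∃ a b : A, a * (u * v) + b * Polynomial.aeval z (derivative f) = 1 := by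
  obtain ⟨α, β, hαβ⟩ := hf
  refine ⟨Polynomial.aeval z α, Polynomial.aeval z β, ?_⟩
  rw [h.mul_eq, ← map_mul, ← map_mul, ← map_add, hαβ, map_one]

/-- The area form of the surface, equal to `du ∧ dz / u` wherever `u` is invertible. The
coefficients `a`, `b` witness that `u v` and `f'(z)` generate the unit ideal. -/
noncomputable def areaForm (u v z a b : A) : ⋀[A]^2 Ω[A⁄k] :=
  (a * u) • exteriorPower.ιMulti A 2 ![D k A v, D k A z] -
    b • exteriorPower.ιMulti A 2 ![D k A u, D k A v]

/-- The Poisson bivector `da ∧ db ↦ {a, b}`, see `hamU`. The coefficients `a`, `b` witness that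
`u v` and `f'(z)` generate the unit ideal. -/
noncomputable def poisson (a b : A) : Ω[A⁄k] [⋀^Fin 2]→ₗ[A] A :=
  (a * u) • derivationWedge h.hamV h.hamZ - b • derivationWedge h.hamU h.hamV

section areaForm

variable {a b : A}

theorem poisson_D_z (hab : a * (u * v) + b * Polynomial.aeval z (derivative f) = 1) (g : A) :
    h.poisson a b ![D k A g, D k A z] = -h.hamZ g := by
  have hrel := h.hamiltonian_relation g
  simp only [poisson, AlternatingMap.sub_apply, AlternatingMap.smul_apply, derivationWedge_D,
    smul_eq_mul, hamU_z, hamV_z, hamZ_z]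
  linear_combination -h.hamZ g * hab - b * hrel

theorem poisson_D_v (hab : a * (u * v) + b * Polynomial.aeval z (derivative f) = 1) (g : A) :
    h.poisson a b ![D k A g, D k A v] = -h.hamV g := by
  simp only [poisson, AlternatingMap.sub_apply, AlternatingMap.smul_apply, derivationWedge_D,
    smul_eq_mul, hamU_v, hamV_v, hamZ_v]
  linear_combination -h.hamV g * hab

theorem span_areaForm_eq_top (h : IsDanielewski f u v z)
    (hab : a * (u * v) + b * Polynomial.aeval z (derivative f) = 1) :
    Submodule.span A {areaForm (k := k) u v z a b} = ⊤ := by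
  set f' := Polynomial.aeval z (derivative f)
  have hrel := h.smul_D_u_add_smul_D_v
  let ω := exteriorPower.ιMulti A 2 (M := Ω[A⁄k])
  have huv : u • ω ![D k A u, D k A v] = -f' • ω ![D k A z, D k A u] :=
    smul_alternatingMap_pair_eq ω (a := v) (by linear_combination (norm := module) hrel)
  have hvz : -f' • ω ![D k A v, D k A z] = v • ω ![D k A u, D k A v] :=
    smul_alternatingMap_pair_eq ω (a := u) (by linear_combination (norm := module) hrel)
  have hzu : v • ω ![D k A z, D k A u] = u • ω ![D k A v, D k A z] :=
    smul_alternatingMap_pair_eq ω (a := -f') (by linear_combination (norm := module) hrel)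
  refine exteriorPower_two_eq_top_of_span_triple h.span_D_eq_top ?_ ?_ ?_ <;>
    rw [Submodule.mem_span_singleton]
  · refine ⟨-f', ?_⟩
    rw [areaForm]
    linear_combination (norm := module) hab • ω ![D k A u, D k A v] + (a * u) • hvz
  · refine ⟨v, ?_⟩
    rw [areaForm]
    linear_combination (norm := module) hab • ω ![D k A v, D k A z] + b • hvz
  · refine ⟨u, ?_⟩
    rw [areaForm]
    linear_combination (norm := module) hab • ω ![D k A z, D k A u] - b • huv - (a * u) • hzu

theorem poisson_areaForm (hab : a * (u * v) + b * Polynomial.aeval z (derivative f) = 1) :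
    exteriorPower.alternatingMapLinearEquiv (h.poisson a b) (areaForm u v z a b) = 1 := by
  rw [areaForm, map_sub, map_smul, map_smul, exteriorPower.alternatingMapLinearEquiv_apply_ιMulti,
    exteriorPower.alternatingMapLinearEquiv_apply_ιMulti, h.poisson_D_z hab, h.poisson_D_v hab,
    hamZ_v, hamV_u, ← hab]
  simp only [smul_eq_mul]
  ring

theorem poisson_bijective (hab : a * (u * v) + b * Polynomial.aeval z (derivative f) = 1) :
    Function.Bijective (exteriorPower.alternatingMapLinearEquiv (h.poisson a b)) := by
  have hsmul (r : A) : exteriorPower.alternatingMapLinearEquiv (h.poisson a b)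
      (r • areaForm u v z a b) = r := by
    rw [map_smul, h.poisson_areaForm hab, smul_eq_mul, mul_one]
  refine ⟨(injective_iff_map_eq_zero _).mpr fun η hη => ?_, fun r => ⟨_, hsmul r⟩⟩
  obtain ⟨r, rfl⟩ : ∃ r : A, r • areaForm u v z a b = η :=
    Submodule.mem_span_singleton.mp (h.span_areaForm_eq_top hab ▸ trivial)
  rw [hsmul] at hη
  rw [hη, zero_smul]

variable (hab : a * (u * v) + b * Polynomial.aeval z (derivative f) = 1)

/-- The trivialization `da ∧ db ↦ {a, b}` of the module of `2`-forms by the Poisson bivector. -/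
noncomputable def poissonEquiv : ⋀[A]^2 Ω[A⁄k] ≃ₗ[A] A :=
  LinearEquiv.ofBijective _ (h.poisson_bijective hab)

theorem poissonEquiv_D_z (g : A) :
    h.poissonEquiv hab (exteriorPower.ιMulti A 2 ![D k A g, D k A z]) = -h.hamZ g :=
  (exteriorPower.alternatingMapLinearEquiv_apply_ιMulti _ _).trans (h.poisson_D_z hab g)

theorem poissonEquiv_D_v (g : A) :
    h.poissonEquiv hab (exteriorPower.ιMulti A 2 ![D k A g, D k A v]) = -h.hamV g :=
  (exteriorPower.alternatingMapLinearEquiv_apply_ιMulti _ _).trans (h.poisson_D_v hab g)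

theorem poissonEquiv_d₁ {d₁ : Ω[A⁄k] →ₗ[k] ⋀[A]^2 Ω[A⁄k]} (hd₁ : IsExteriorDerivative d₁)
    (x g : A) (q : k[X]) :
    h.poissonEquiv hab (d₁ (D k A x + g • D k A z + (Polynomial.aeval z q * u) • D k A v)) =
      -(h.hamZ g + Polynomial.aeval z (derivativeMul f q)) := by
  rw [map_add d₁, map_add d₁, hd₁.apply_D, zero_add, hd₁, hd₁, map_add, poissonEquiv_D_z,
    poissonEquiv_D_v, hamV_aeval_mul_u, neg_add]

end areaForm

end CommRing

section Field

variable {k A : Type*} [Field k] [CommRing A] [Algebra k A] {f : k[X]} {u v z : A}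
  (h : IsDanielewski f u v z)

theorem iSup_eigenspace_hamZ :
    ⨆ μ, Module.End.eigenspace h.hamZ.toLinearMap μ = (⊤ : Submodule k A) :=
  h.eq_top_of_pow_mul_aeval_mem
    (fun n p => Submodule.mem_iSup_of_mem (n * 1) (Module.End.mem_eigenspace_iff.mpr
      (derivation_pow_mul_aeval h.hamZ_z (by rw [hamZ_u, one_smul]) n p)))
    (fun n p => Submodule.mem_iSup_of_mem (n * -1) (Module.End.mem_eigenspace_iff.mpr
      (derivation_pow_mul_aeval h.hamZ_z (by rw [hamZ_v, neg_one_smul]) n p)))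

theorem disjoint_ker_hamZ_range_hamZ :
    Disjoint (LinearMap.ker h.hamZ.toLinearMap) (LinearMap.range h.hamZ.toLinearMap) :=
  disjoint_ker_range_of_iSup_eigenspace_eq_top h.iSup_eigenspace_hamZ

variable [CharZero k]

theorem isCompl_range_aeval_range_hamZ :
    IsCompl (LinearMap.range (Polynomial.aeval (R := k) z).toLinearMap)
      (LinearMap.range h.hamZ.toLinearMap) := by
  refine ⟨h.disjoint_ker_hamZ_range_hamZ.mono_left h.range_aeval_le_ker_hamZ,
    codisjoint_iff.mpr (h.eq_top_of_pow_mul_aeval_mem ?_ ?_)⟩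
  · rintro (_ | n) p
    · exact Submodule.mem_sup_left ⟨p, by simp⟩
    · exact Submodule.mem_sup_right
        (pow_succ_mul_aeval_mem_range h.hamZ_z one_ne_zero (by rw [hamZ_u, one_smul]) n p)
  · rintro (_ | n) p
    · exact Submodule.mem_sup_left ⟨p, by simp⟩
    · exact Submodule.mem_sup_right
        (pow_succ_mul_aeval_mem_range h.hamZ_z (neg_ne_zero.mpr one_ne_zero)
          (by rw [hamZ_v, neg_one_smul]) n p)

theorem ker_hamZ :
    LinearMap.ker h.hamZ.toLinearMap =
      LinearMap.range (Polynomial.aeval (R := k) z).toLinearMap := by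
  refine (eq_of_le_of_inf_le_of_sup_le (z := LinearMap.range h.hamZ.toLinearMap)
    h.range_aeval_le_ker_hamZ ?_ ?_).symm
  · exact h.disjoint_ker_hamZ_range_hamZ.le_bot.trans bot_le
  · exact h.isCompl_range_aeval_range_hamZ.sup_eq_top ▸ le_top

theorem ker_D (h : IsDanielewski f u v z) : LinearMap.ker (D k A).toLinearMap = k ∙ (1 : A) := by
  refine le_antisymm (fun a ha => ?_) ?_
  · replace ha : D k A a = 0 := ha
    have hL (L : Derivation k A A) : L a = 0 := by
      rw [← L.liftKaehlerDifferential_comp_D, ha, map_zero]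
    obtain ⟨p, rfl⟩ : a ∈ LinearMap.range (Polynomial.aeval (R := k) z).toLinearMap :=
      h.ker_hamZ ▸ hL h.hamZ
    have hp : derivative p = 0 :=
      h.eq_zero_of_mul_aeval_eq_zero (neg_eq_zero.mp ((h.hamU_aeval p).symm.trans (hL h.hamU)))
    rw [Polynomial.eq_C_of_derivative_eq_zero hp]
    exact Submodule.mem_span_singleton.mpr ⟨p.coeff 0, by simp [Algebra.smul_def]⟩
  · rw [Submodule.span_singleton_le_iff_mem]
    exact (D k A).map_one_eq_zero

theorem finrank_ker_D (h : IsDanielewski f u v z) :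
    Module.finrank k (LinearMap.ker (D k A).toLinearMap) = 1 := by
  have : Nontrivial A := h.aeval_injective.nontrivial
  rw [h.ker_D, finrank_span_singleton one_ne_zero]

theorem eq_top_of_D_mem_of_smul_D_mem (h : IsDanielewski f u v z) {S : Submodule k Ω[A⁄k]}
    (hD : ∀ a, D k A a ∈ S) (hz : ∀ g : A, g • D k A z ∈ S)
    (hv : ∀ q : k[X], (Polynomial.aeval z q * u) • D k A v ∈ S) : S = ⊤ := by
  have hvu : v * u = Polynomial.aeval z f := (mul_comm v u).trans h.mul_eq
  have hu_mem : ∀ a : A, a • D k A u ∈ S := by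
    refine h.smul_mem_of_pow_mul_aeval_smul_mem (pow_mul_aeval_smul_D_mem hD hz) ?_
    rintro (_ | _ | n) p
    · simpa using pow_mul_aeval_smul_D_mem hD hz (x := u) 0 p
    · have hreduce : (v ^ (0 + 1) * Polynomial.aeval z p) • D k A u =
          (Polynomial.aeval z p * Polynomial.aeval z (derivative f)) • D k A z -
            (Polynomial.aeval z p * u) • D k A v := by
        linear_combination (norm := module) Polynomial.aeval z p • h.smul_D_u_add_smul_D_v
      rw [hreduce]
      exact S.sub_mem (hz _) (hv p)
    · exact pow_add_two_mul_aeval_smul_D_mem hD hz h.mul_eq n p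
  have hv_mem : ∀ a : A, a • D k A v ∈ S := by
    refine h.smul_mem_of_pow_mul_aeval_smul_mem ?_ (pow_mul_aeval_smul_D_mem hD hz)
    rintro (_ | _ | n) p
    · simpa using pow_mul_aeval_smul_D_mem hD hz (x := v) 0 p
    · simpa [mul_comm] using hv p
    · exact pow_add_two_mul_aeval_smul_D_mem hD hz hvu n p
  refine eq_top_iff.mpr fun ω _ => ?_
  obtain ⟨a, b, g, rfl⟩ : ∃ a b g : A, a • D k A u + b • D k A v + g • D k A z = ω :=
    Submodule.mem_span_triple.mp (h.span_D_eq_top ▸ trivial)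
  exact S.add_mem (S.add_mem (hu_mem a) (hv_mem b)) (hz g)

theorem exists_eq_D_add (h : IsDanielewski f u v z) (ω : Ω[A⁄k]) :
    ∃ (a g : A) (q : k[X]),
      ω = D k A a + g • D k A z + (Polynomial.aeval z q * u) • D k A v := by
  let S : Submodule k Ω[A⁄k] :=
    LinearMap.range (D k A).toLinearMap ⊔
      LinearMap.range ((LinearMap.toSpanSingleton A Ω[A⁄k] (D k A z)).restrictScalars k) ⊔
      LinearMap.range ((LinearMap.toSpanSingleton A Ω[A⁄k] (u • D k A v)).restrictScalars k ∘ₗ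
        (Polynomial.aeval (R := k) z).toLinearMap)
  have hS : S = ⊤ := h.eq_top_of_D_mem_of_smul_D_mem
    (fun a => Submodule.mem_sup_left (Submodule.mem_sup_left ⟨a, rfl⟩))
    (fun g => Submodule.mem_sup_left (Submodule.mem_sup_right ⟨g, rfl⟩))
    (fun q => Submodule.mem_sup_right ⟨q, by simp [mul_smul]⟩)
  have hω : ω ∈ S := hS ▸ trivial
  obtain ⟨_, hω', _, ⟨q, rfl⟩, rfl⟩ := Submodule.mem_sup.mp hω
  obtain ⟨_, ⟨a, rfl⟩, _, ⟨g, rfl⟩, rfl⟩ := Submodule.mem_sup.mp hω'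
  exact ⟨a, g, q, by simp [mul_smul]⟩

section deRham

variable {d₁ : Ω[A⁄k] →ₗ[k] ⋀[A]^2 Ω[A⁄k]}

theorem mem_range_d₁_iff {a b : A}
    (hab : a * (u * v) + b * Polynomial.aeval z (derivative f) = 1)
    (hd₁ : IsExteriorDerivative d₁) (η : ⋀[A]^2 Ω[A⁄k]) :
    η ∈ LinearMap.range d₁ ↔ ∃ (g : A) (q : k[X]),
      h.poissonEquiv hab η = h.hamZ g + Polynomial.aeval z (derivativeMul f q) := by
  constructor
  · rintro ⟨ω, rfl⟩
    obtain ⟨x, g, q, rfl⟩ := h.exists_eq_D_add ω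
    refine ⟨-g, -q, ?_⟩
    rw [h.poissonEquiv_d₁ hab hd₁, map_neg, map_neg, map_neg, neg_add]
  · rintro ⟨g, q, hη⟩
    refine ⟨-(D k A 0 + g • D k A z + (Polynomial.aeval z q * u) • D k A v), ?_⟩
    apply (h.poissonEquiv hab).injective
    rw [map_neg, map_neg, h.poissonEquiv_d₁ hab hd₁, neg_neg, hη]

theorem eq_zero_of_hamZ_add_aeval_eq_zero {p : k[X]} {g : A}
    (hpg : h.hamZ g + Polynomial.aeval z p = 0) : h.hamZ g = 0 ∧ p = 0 := by
  have hg : h.hamZ g = Polynomial.aeval z (-p) := by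
    rw [map_neg]
    exact eq_neg_of_add_eq_zero_left hpg
  have hzero : h.hamZ g = 0 :=
    Submodule.disjoint_def.mp h.isCompl_range_aeval_range_hamZ.disjoint _ ⟨-p, hg.symm⟩ ⟨g, rfl⟩
  refine ⟨hzero, h.aeval_injective ?_⟩
  rw [map_zero, ← hpg, hzero, zero_add]

theorem ker_d₁_le_range_D (h : IsDanielewski f u v z) (hf : f.Separable)
    (hdeg : f.natDegree ≠ 0) (hd₁ : IsExteriorDerivative d₁) :
    LinearMap.ker d₁ ≤ LinearMap.range (D k A).toLinearMap := by
  intro ω hω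
  obtain ⟨a, b, hab⟩ := h.exists_bezout hf
  obtain ⟨x, g, q, rfl⟩ := h.exists_eq_D_add ω
  have hzero := h.poissonEquiv_d₁ hab hd₁ x g q
  rw [LinearMap.mem_ker.mp hω, map_zero, zero_eq_neg] at hzero
  obtain ⟨hg, hq⟩ := h.eq_zero_of_hamZ_add_aeval_eq_zero hzero
  obtain rfl : q = 0 := derivativeMul_injective hdeg (hq.trans (map_zero _).symm)
  obtain ⟨p, rfl⟩ : g ∈ LinearMap.range (Polynomial.aeval (R := k) z).toLinearMap :=
    h.ker_hamZ ▸ hg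
  obtain ⟨P, rfl⟩ := derivative_surjective p
  exact ⟨x + Polynomial.aeval z P, by simp [Derivation.map_aeval]⟩

theorem finrank_quotient_range_d₁ (h : IsDanielewski f u v z) (hf : f.Separable)
    (hdeg : f.natDegree ≠ 0) (hd₁ : IsExteriorDerivative d₁) :
    Module.finrank k ((⋀[A]^2 Ω[A⁄k]) ⧸ LinearMap.range d₁) = f.natDegree - 1 := by
  obtain ⟨a, b, hab⟩ := h.exists_bezout hf
  let π := (h.poissonEquiv hab).restrictScalars k
  let φ : k[X] →ₗ[k] (⋀[A]^2 Ω[A⁄k]) ⧸ LinearMap.range d₁ :=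
    (LinearMap.range d₁).mkQ ∘ₗ π.symm.toLinearMap ∘ₗ (Polynomial.aeval (R := k) z).toLinearMap
  have hφ (p : k[X]) : φ p = (LinearMap.range d₁).mkQ (π.symm (Polynomial.aeval z p)) := rfl
  have hπ (x : A) : h.poissonEquiv hab (π.symm x) = x := π.apply_symm_apply x
  have hsurj : Function.Surjective φ := by
    intro η
    obtain ⟨η, rfl⟩ := (LinearMap.range d₁).mkQ_surjective η
    obtain ⟨_, _, ⟨p, rfl⟩, ⟨g, rfl⟩, hη⟩ := Submodule.codisjoint_iff_exists_add_eq.mp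
      h.isCompl_range_aeval_range_hamZ.codisjoint (h.poissonEquiv hab η)
    refine ⟨p, (Submodule.Quotient.eq _).mpr ((h.mem_range_d₁_iff hab hd₁ _).mpr ⟨-g, 0, ?_⟩)⟩
    rw [map_sub, ← hη]
    simp [hπ]
  have hker : LinearMap.ker φ = LinearMap.range (derivativeMul f) := by
    ext p
    rw [LinearMap.mem_ker, hφ, Submodule.mkQ_apply, Submodule.Quotient.mk_eq_zero,
      h.mem_range_d₁_iff hab hd₁, hπ]
    constructor
    · rintro ⟨g, q, hp⟩
      refine ⟨q, sub_eq_zero.mp (h.eq_zero_of_hamZ_add_aeval_eq_zero (g := g) ?_).2⟩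
      rw [map_sub, hp]
      ring
    · rintro ⟨q, rfl⟩
      exact ⟨0, q, by rw [map_zero, zero_add]⟩
  rw [← (φ.quotKerEquivOfSurjective hsurj).finrank_eq, hker,
    finrank_quotient_range_derivativeMul hdeg]

end deRham

end Field

end IsDanielewski

section Quadric

theorem C_sq_eq_neg_one {k σ : Type*} [CommRing k] {i : k} (hi : i ^ 2 = -1) :
    (C i : MvPolynomial σ k) ^ 2 = -1 := by
  rw [← map_pow, hi, map_neg, map_one]

variable {k : Type*} [CommRing k] [Invertible (2 : k)]

/-- The linear change of coordinates `(x, y, z) ↦ (x + i y, i y - x, z)`, for `i ^ 2 = -1`, which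
turns `-(x ^ 2 + y ^ 2)` into a product of coordinates. -/
noncomputable def isotropicCoordinates {i : k} (hi : i ^ 2 = -1) :
    MvPolynomial (Fin 3) k ≃ₐ[k] MvPolynomial (Fin 3) k :=
  have hCi := C_sq_eq_neg_one (σ := Fin 3) hi
  have hC2 : (C ⅟2 : MvPolynomial (Fin 3) k) * 2 = 1 := by
    rw [← map_ofNat C 2, ← map_mul, invOf_mul_self, map_one]
  AlgEquiv.ofAlgHom (aeval ![X 0 + C i * X 1, C i * X 1 - X 0, X 2])
    (aeval ![C ⅟2 * (X 0 - X 1), -(C ⅟2 * C i * (X 0 + X 1)), X 2])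
    (by
      refine MvPolynomial.algHom_ext fun j => ?_
      fin_cases j <;>
        simp only [Fin.zero_eta, Fin.mk_one, Fin.reduceFinMk, AlgHom.comp_apply, AlgHom.id_apply,
          aeval_X, Matrix.cons_val, map_mul, map_neg, map_sub, map_add, aeval_C, algebraMap_eq]
      · linear_combination X 0 * hC2
      · linear_combination X 1 * hC2 - C ⅟2 * 2 * X 1 * hCi)
    (by
      refine MvPolynomial.algHom_ext fun j => ?_
      fin_cases j <;>
        simp only [Fin.zero_eta, Fin.mk_one, Fin.reduceFinMk, AlgHom.comp_apply, AlgHom.id_apply,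
          aeval_X, Matrix.cons_val, map_mul, map_sub, map_add, aeval_C, algebraMap_eq]
      · linear_combination X 0 * hC2 - C ⅟2 * (X 0 + X 1) * hCi
      · linear_combination X 1 * hC2 - C ⅟2 * (X 0 + X 1) * hCi)

theorem isDanielewski_quadric {i : k} (hi : i ^ 2 = -1) (c : k) :
    IsDanielewski
      (A := MvPolynomial (Fin 3) k ⧸ Ideal.span {X 0 ^ 2 + X 1 ^ 2 + X 2 ^ 2 - C c})
      (Polynomial.X ^ 2 - Polynomial.C c) (Ideal.Quotient.mk _ (X 0 + C i * X 1))
      (Ideal.Quotient.mk _ (C i * X 1 - X 0)) (Ideal.Quotient.mk _ (X 2)) := by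
  set I : Ideal (MvPolynomial (Fin 3) k) := Ideal.span {X 0 ^ 2 + X 1 ^ 2 + X 2 ^ 2 - C c}
  have hcomp : aeval ![Ideal.Quotient.mk I (X 0 + C i * X 1),
      Ideal.Quotient.mk I (C i * X 1 - X 0), Ideal.Quotient.mk I (X 2)] =
      (Ideal.Quotient.mkₐ k I).comp (isotropicCoordinates hi).toAlgHom := by
    ext j
    fin_cases j <;> simp [isotropicCoordinates]
  have hrel : isotropicCoordinates hi
      (X 0 * X 1 - Polynomial.aeval (X 2) (Polynomial.X ^ 2 - Polynomial.C c)) =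
      -(X 0 ^ 2 + X 1 ^ 2 + X 2 ^ 2 - C c) := by
    simp only [isotropicCoordinates, AlgEquiv.ofAlgHom_apply, map_sub, map_mul, map_pow, aeval_X,
      Polynomial.aeval_X, Polynomial.aeval_C, aeval_C, Matrix.cons_val, algebraMap_eq]
    linear_combination X 1 ^ 2 * C_sq_eq_neg_one (σ := Fin 3) hi
  constructor
  · rw [hcomp]
    exact (Ideal.Quotient.mkₐ_surjective k I).comp (isotropicCoordinates hi).surjective
  · ext P
    rw [hcomp, RingHom.mem_ker, Ideal.mem_span_singleton,
      ← map_dvd_iff (isotropicCoordinates hi), hrel, neg_dvd, ← Ideal.mem_span_singleton]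
    exact Ideal.Quotient.eq_zero_iff_mem

end Quadric

theorem stmt14_general {k A : Type*} [Field k] [CharZero k] [CommRing A] [Algebra k A] {f : k[X]}
    {u v z : A} (h : IsDanielewski f u v z) (hf : f.Separable) (hdeg : f.natDegree ≠ 0)
    {d₁ : Ω[A⁄k] →ₗ[k] ⋀[A]^2 Ω[A⁄k]} (hd₁ : IsExteriorDerivative d₁) :
    Module.finrank k (LinearMap.ker (KaehlerDifferential.D k A).toLinearMap) = 1 ∧
    Subsingleton
      (LinearMap.ker d₁ ⧸ Submodule.comap (LinearMap.ker d₁).subtype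
        (LinearMap.range (KaehlerDifferential.D k A).toLinearMap)) ∧
    Module.finrank k ((⋀[A]^2 Ω[A⁄k]) ⧸ LinearMap.range d₁) = f.natDegree - 1 := by
  refine ⟨h.finrank_ker_D, ?_, h.finrank_quotient_range_d₁ hf hdeg hd₁⟩
  rw [Submodule.Quotient.subsingleton_iff, Submodule.comap_subtype_eq_top]
  exact h.ker_d₁_le_range_D hf hdeg hd₁

/-- the algebraic de Rham cohomology of the smooth affine quadric
`x² + y² + z² = c` (`c ≠ 0`) over `ℂ` has `dim H⁰ = 1`, `H¹ = 0`, `dim H² = 1`.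
Here `Ω⁰ = A`, `Ω¹ = Ω_{A/ℂ}` is the module of Kähler differentials with universal
derivation `d₀ = D`, `Ω² = Λ²_A Ω¹`, and `d₁` is any `ℂ`-linear map satisfying the
characterizing property `d₁(a·db) = da ∧ db` of the exterior derivative. -/
theorem stmt14 (c : ℂ) (hc : c ≠ 0)
    (d1 : KaehlerDifferential ℂ (QuadricRing c) →ₗ[ℂ]
          ⋀[QuadricRing c]^2 (KaehlerDifferential ℂ (QuadricRing c)))
    (hd1 : ∀ a b : QuadricRing c,
      d1 (a • KaehlerDifferential.D ℂ (QuadricRing c) b) =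
        ⟨ExteriorAlgebra.ιMulti (QuadricRing c) 2
            ![KaehlerDifferential.D ℂ (QuadricRing c) a,
              KaehlerDifferential.D ℂ (QuadricRing c) b],
         ExteriorAlgebra.ιMulti_range (QuadricRing c) 2 (Set.mem_range_self _)⟩) :
    Module.finrank ℂ
        (LinearMap.ker ((KaehlerDifferential.D ℂ (QuadricRing c)).toLinearMap)) = 1 ∧
    Subsingleton
      (↥(LinearMap.ker d1) ⧸
        Submodule.comap (LinearMap.ker d1).subtype
          (LinearMap.range ((KaehlerDifferential.D ℂ (QuadricRing c)).toLinearMap))) ∧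
    Module.finrank ℂ
        ((⋀[QuadricRing c]^2 (KaehlerDifferential ℂ (QuadricRing c))) ⧸
          LinearMap.range d1) = 1 := by
  have hf : (Polynomial.X ^ 2 - Polynomial.C c).Separable :=
    Polynomial.separable_X_pow_sub_C c two_ne_zero hc
  have hdeg : (Polynomial.X ^ 2 - Polynomial.C c).natDegree = 2 :=
    Polynomial.natDegree_X_pow_sub_C
  simpa only [hdeg] using stmt14_general (isDanielewski_quadric Complex.I_sq c) hf
    (hdeg.trans_ne two_ne_zero) hd1
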